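/- Let m, n be nonzero integers with |m| = |n|. Then the Baumslag–Solitar group BS(m,n) embeds in Thompson's group V: there exists an injective group homomorphism from BS(m,n) to the permutation group of the Cantor set C = ℕ → Bool whose image consists of prefix replacement maps. -/

import Mathlib

/-!
If `|m| = |n|`, every element of `BS(m,n)` conjugates `aᵐ` to `aᵐ` or its inverse, so the powers
of `aᵐ` form a normal subgroup, with quotient the free product `ℤ/|m| * ℤ`. Ping-pong on the cones
of `0` and `1` embeds this free product into `V`. In a second homomorphism from `BS(m,n)` to `V`,
`a` has infinite order: if `m = n` send `b` to `1` and `a` to any `w` of infinite order; if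
`m = -n` let `a` act as `w` on one half of the Cantor set and as `w⁻¹` on the other, and let `b`
exchange the halves. The kernels of the two homomorphisms intersect trivially, so acting by one of
them on each half of the Cantor set is faithful.
-/

/-- The Cantor set `C = ℕ → Bool`. -/
abbrev Cantor : Type := ℕ → Bool

/-- Prepend a finite word `a` to an element `ξ` of the Cantor set. -/
def prepend (a : List Bool) (ξ : Cantor) : Cantor :=
  fun n => if h : n < a.length then a.get ⟨n, h⟩ else ξ (n - a.length)

/-- A finite set of finite binary words is a complete antichain if distinct elements
are incomparable in the prefix order and every `ξ : ℕ → Bool` has an initial segment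
lying in it. -/
def IsCompleteAntichain (A : Set (List Bool)) : Prop :=
  A.Finite ∧
  (∀ a ∈ A, ∀ b ∈ A, a ≠ b → ¬ a <+: b) ∧
  (∀ ξ : Cantor, ∃ n : ℕ, (List.ofFn fun i : Fin n => ξ i) ∈ A)

/-- A permutation of the Cantor set is a prefix replacement map if it is given by
a bijection between two finite complete antichains of prefixes. -/
def IsPrefixReplacement (g : Equiv.Perm Cantor) : Prop :=
  ∃ A B : Set (List Bool), IsCompleteAntichain A ∧ IsCompleteAntichain B ∧
    ∃ σ : A ≃ B, ∀ (a : A) (ξ : Cantor), g (prepend a ξ) = prepend (σ a : List Bool) ξ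

/-- The single Baumslag–Solitar relator `b⁻¹ aᵐ b (aⁿ)⁻¹` in the free group on two
generators (`0 ↦ a`, `1 ↦ b`). -/
def bsRels (m n : ℤ) : Set (FreeGroup (Fin 2)) :=
  {(FreeGroup.of 1)⁻¹ * (FreeGroup.of 0) ^ m * FreeGroup.of 1 * ((FreeGroup.of 0) ^ n)⁻¹}

/-- The Baumslag–Solitar group `BS(m,n) = ⟨a, b ∣ b⁻¹ aᵐ b = aⁿ⟩`. -/
abbrev BS (m n : ℤ) : Type := PresentedGroup (bsRels m n)

/-- The generator `a` of `BS(m,n)`. -/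
def BS.a (m n : ℤ) : BS m n := PresentedGroup.of 0

/-- The generator `b` of `BS(m,n)`. -/
def BS.b (m n : ℤ) : BS m n := PresentedGroup.of 1

open Function Monoid.Coprod Pointwise
open scoped Cardinal

/-! ### Groups and ping-pong -/

section PingPong

universe u

variable {G H : Type u} {K α : Type*} [Group G] [Group H] [Group K] [MulAction K α]

/-- The pair of groups `G`, `H` as a family over `Bool`, to pass from `G ∗ H` to the coproduct of a
family, for which Mathlib has the ping-pong lemma. -/
abbrev boolFamily (G H : Type u) : Bool → Type u := fun i => cond i H G

instance : ∀ i, Group (boolFamily G H i) :=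
  Bool.rec ‹Group G› ‹Group H›

theorem coprod_lift_injective_of_ping_pong (f : G →* K) (g : H →* K) (hcard : 3 ≤ #G ∨ 3 ≤ #H)
    {X Y : Set α} (hX : X.Nonempty) (hY : Y.Nonempty) (hXY : Disjoint X Y)
    (hf : ∀ x ≠ 1, f x • Y ⊆ X) (hg : ∀ y ≠ 1, g y • X ⊆ Y) :
    Injective (Monoid.Coprod.lift f g) := by
  let fg : ∀ i, boolFamily G H i →* K := Bool.rec f g
  let toCoprodI : G ∗ H →* Monoid.CoprodI (boolFamily G H) :=
    Monoid.Coprod.lift (Monoid.CoprodI.of (M := boolFamily G H) (i := false))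
      (Monoid.CoprodI.of (M := boolFamily G H) (i := true))
  let ofCoprodI : Monoid.CoprodI (boolFamily G H) →* G ∗ H :=
    Monoid.CoprodI.lift (Bool.rec inl inr)
  have hinj : Injective toCoprodI := by
    have : ofCoprodI.comp toCoprodI = .id _ := by
      ext <;> simp [ofCoprodI, toCoprodI]
    exact LeftInverse.injective (DFunLike.congr_fun this)
  have hlift : Monoid.Coprod.lift f g = (Monoid.CoprodI.lift fg).comp toCoprodI := by
    ext <;> simp [fg, toCoprodI]
  rw [hlift, MonoidHom.coe_comp]
  refine .comp (Monoid.CoprodI.lift_injective_of_ping_pong fg ?_ (Bool.rec X Y) ?_ ?_ ?_) hinj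
  · exact .inr (hcard.elim (⟨false, ·⟩) (⟨true, ·⟩))
  · exact Bool.rec hX hY
  · rintro (_ | _) (_ | _) hij
    exacts [absurd rfl hij, hXY, hXY.symm, absurd rfl hij]
  · rintro (_ | _) (_ | _) hij
    exacts [absurd rfl hij, hf, hg, absurd rfl hij]

end PingPong

theorem disjoint_zpowers_ker {G H : Type*} [Group G] [Group H] {f : G →* H} {x : G}
    (hx : ¬IsOfFinOrder (f x)) : Disjoint (Subgroup.zpowers x) f.ker := by
  rw [Subgroup.disjoint_def]
  rintro _ ⟨j, rfl⟩ hj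
  have hj : f x ^ j = 1 := by rwa [← map_zpow]
  by_contra h
  exact hx (isOfFinOrder_iff_zpow_eq_one.2 ⟨j, by rintro rfl; simp at h, hj⟩)

theorem zpowers_zpow_eq_of_abs_eq {G : Type*} [Group G] (x : G) {m n : ℤ} (h : |m| = |n|) :
    Subgroup.zpowers (x ^ m) = Subgroup.zpowers (x ^ n) := by
  obtain rfl | rfl := abs_eq_abs.mp h
  · rfl
  · rw [zpow_neg, Subgroup.zpowers_inv]

section ZPow

variable {M G α : Type*} [Monoid M] [MulAction M α] [Group G] [MulAction G α] {A P N : Set α}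

theorem pow_smul_subset {g : M} (hA : g • A ⊆ P) (hP : g • P ⊆ P) {n : ℕ} (hn : n ≠ 0) :
    g ^ n • A ⊆ P := by
  induction n, Nat.one_le_iff_ne_zero.mpr hn using Nat.le_induction with
  | base => rwa [pow_one]
  | succ n _ ih =>
    rw [pow_succ', mul_smul]
    exact (Set.smul_set_mono (ih (by omega))).trans hP

theorem zpow_smul_subset_union {g : G} (hA : g • A ⊆ P) (hP : g • P ⊆ P) (hA' : g⁻¹ • A ⊆ N)
    (hN : g⁻¹ • N ⊆ N) {j : ℤ} (hj : j ≠ 0) : g ^ j • A ⊆ P ∪ N := by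
  obtain ⟨n, rfl | rfl⟩ := j.eq_nat_or_neg
  · rw [zpow_natCast]
    exact (pow_smul_subset hA hP (by simpa using hj)).trans Set.subset_union_left
  · rw [zpow_neg, zpow_natCast, ← inv_pow]
    exact (pow_smul_subset hA' hN (by simpa using hj)).trans Set.subset_union_right

theorem not_isOfFinOrder_of_zpow_smul_subset {g : G} (hA : A.Nonempty) (hAP : Disjoint A P)
    (h : ∀ j : ℤ, j ≠ 0 → g ^ j • A ⊆ P) : ¬IsOfFinOrder g := by
  rw [isOfFinOrder_iff_zpow_eq_one]
  rintro ⟨j, hj, hgj⟩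
  have hAP' := h j hj
  rw [hgj, one_smul] at hAP'
  exact hA.ne_empty (hAP.eq_bot_of_le hAP')

end ZPow

/-! ### Cones and codes -/

/-- The cone of a word `u`: the points of the Cantor set which start with `u`. -/
def cone (u : List Bool) : Set Cantor := Set.range (prepend u)

theorem prepend_append (u v : List Bool) (ξ : Cantor) :
    prepend (u ++ v) ξ = prepend u (prepend v ξ) := by
  funext n
  simp only [prepend, List.length_append, List.get_eq_getElem, List.getElem_append]
  split_ifs <;> first | rfl | omega | congr 1; omega

theorem prepend_injective (u : List Bool) : Injective (prepend u) := by
  intro ξ η h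
  funext n
  simpa [prepend] using congrFun h (n + u.length)

theorem mem_cone_iff_forall_getElem {u : List Bool} {ξ : Cantor} :
    ξ ∈ cone u ↔ ∀ (n : ℕ) (h : n < u.length), u[n] = ξ n := by
  constructor
  · rintro ⟨η, rfl⟩ n h
    simp [prepend, h]
  · refine fun h => ⟨fun n => ξ (n + u.length), funext fun n => ?_⟩
    by_cases hn : n < u.length
    · simp [prepend, hn, h]
    · simp [prepend, hn, Nat.sub_add_cancel (not_lt.mp hn)]

theorem mem_cone_iff_isPrefix_ofFn {u : List Bool} {ξ : Cantor} {N : ℕ} (hN : u.length ≤ N) :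
    ξ ∈ cone u ↔ u <+: List.ofFn fun i : Fin N => ξ i := by
  simp [mem_cone_iff_forall_getElem, List.prefix_iff_getElem, hN]

theorem mem_cone_cons {b : Bool} {u : List Bool} {ξ : Cantor} :
    ξ ∈ cone (b :: u) ↔ b = ξ 0 ∧ (fun n => ξ (n + 1)) ∈ cone u := by
  simp only [mem_cone_iff_forall_getElem]
  rw [← Nat.and_forall_add_one]
  simp

theorem cone_nil : cone [] = Set.univ :=
  Set.eq_univ_of_forall fun ξ => by simp [mem_cone_iff_forall_getElem]

theorem cone_nonempty (u : List Bool) : (cone u).Nonempty := ⟨_, fun _ => false, rfl⟩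

theorem prepend_mem_cone (u : List Bool) (ξ : Cantor) : prepend u ξ ∈ cone u := ⟨ξ, rfl⟩

theorem cone_subset_cone {u v : List Bool} (h : u <+: v) : cone v ⊆ cone u := by
  obtain ⟨w, rfl⟩ := h
  rintro _ ⟨ξ, rfl⟩
  exact ⟨prepend w ξ, (prepend_append u w ξ).symm⟩

theorem isPrefix_of_prepend_mem_cone {u v : List Bool} {ξ : Cantor} (h : prepend v ξ ∈ cone u)
    (huv : u.length ≤ v.length) : u <+: v := by
  have hv : (List.ofFn fun i : Fin v.length => prepend v ξ i) = v := by
    apply List.ext_getElem <;> simp +contextual [prepend]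
  rwa [mem_cone_iff_isPrefix_ofFn huv, hv] at h

theorem disjoint_cone_singleton {b c : Bool} (h : b ≠ c) : Disjoint (cone [b]) (cone [c]) :=
  Set.disjoint_left.mpr fun _ hb hc =>
    h ((mem_cone_cons.mp hb).1.trans (mem_cone_cons.mp hc).1.symm)

section Codes

variable {ι κ : Type*} {p : ι → List Bool} {q : κ → List Bool}

/-- A code is a family of words whose cones partition the Cantor set. The words of a finite code
form a complete antichain; indexing them turns a bijection between two complete antichains into a
pair of codes with the same index type. -/
def IsCode (p : ι → List Bool) : Prop :=
  Bijective fun x : ι × Cantor => prepend (p x.1) x.2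

theorem isCode_iff_existsUnique_mem_cone : IsCode p ↔ ∀ ξ, ∃! i, ξ ∈ cone (p i) := by
  refine (bijective_iff_existsUnique _).trans (forall_congr' fun ξ => ⟨?_, ?_⟩)
  · rintro ⟨⟨i, η⟩, rfl, huniq⟩
    refine ⟨i, prepend_mem_cone _ _, ?_⟩
    rintro j ⟨ζ, hζ⟩
    exact congrArg Prod.fst (huniq (j, ζ) hζ)
  · rintro ⟨i, ⟨η, rfl⟩, huniq⟩
    refine ⟨(i, η), rfl, ?_⟩
    rintro ⟨j, ζ⟩ h
    obtain rfl := huniq j ⟨ζ, h⟩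
    exact Prod.ext rfl (prepend_injective _ h)

theorem isCode_iff_existsUnique_isPrefix {N : ℕ} (hN : ∀ i, (p i).length ≤ N) :
    IsCode p ↔ ∀ v : Fin N → Bool, ∃! i, p i <+: List.ofFn v := by
  simp only [isCode_iff_existsUnique_mem_cone, mem_cone_iff_isPrefix_ofFn (hN _)]
  have hsurj : Surjective fun (ξ : Cantor) (i : Fin N) => ξ i :=
    Fin.val_injective.surjective_comp_right
  exact (hsurj.forall (p := fun v => ∃! i, p i <+: List.ofFn v)).symm

theorem isCode_ofFn (N : ℕ) : IsCode (List.ofFn : (Fin N → Bool) → List Bool) :=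
  (isCode_iff_existsUnique_isPrefix fun _ => List.length_ofFn.le).mpr fun v =>
    ⟨v, List.prefix_rfl, fun w h => List.ofFn_injective (h.eq_of_length (by simp))⟩

theorem isCode_singleton : IsCode fun b : Bool => [b] :=
  (isCode_iff_existsUnique_isPrefix (N := 1) fun _ => le_rfl).mpr <| by
    unfold ExistsUnique; decide

namespace IsCode

theorem comp_equiv (hp : IsCode p) (e : κ ≃ ι) : IsCode (p ∘ e) :=
  hp.comp (e.prodCongr (.refl Cantor)).bijective

theorem append (hp : IsCode p) (hq : IsCode q) : IsCode fun x : ι × κ => p x.1 ++ q x.2 := by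
  have h := hp.comp ((bijective_id.prodMap hq).comp (Equiv.prodAssoc ι κ Cantor).bijective)
  simp only [IsCode, prepend_append]
  exact h

theorem option (hp : IsCode p) :
    IsCode fun i : Option ι => i.elim [false] fun i => true :: p i := by
  rw [isCode_iff_existsUnique_mem_cone] at hp ⊢
  intro ξ
  cases hξ : ξ 0
  · refine ⟨none, by simp [mem_cone_cons, hξ, cone_nil], ?_⟩
    rintro (_ | i) <;> simp [mem_cone_cons, hξ]
  · obtain ⟨i, hi, huniq⟩ := hp fun n => ξ (n + 1)
    refine ⟨some i, by simp [mem_cone_cons, hξ, hi], ?_⟩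
    rintro (_ | j)
    · simp [mem_cone_cons, hξ]
    · simpa [mem_cone_cons, hξ] using huniq j

theorem injective (hp : IsCode p) : Injective p := by
  intro i j h
  let ξ : Cantor := fun _ => false
  exact congrArg Prod.fst (hp.1 (a₁ := (i, ξ)) (a₂ := (j, ξ)) (by simp only [h]))

theorem isCompleteAntichain_range [Finite ι] (hp : IsCode p) :
    IsCompleteAntichain (Set.range p) := by
  rw [isCode_iff_existsUnique_mem_cone] at hp
  refine ⟨Set.finite_range p, ?_, fun ξ => ?_⟩
  · rintro _ ⟨i, rfl⟩ _ ⟨j, rfl⟩ hne hij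
    obtain ⟨ξ, hξ⟩ := cone_nonempty (p j)
    exact hne (congrArg p ((hp ξ).unique (cone_subset_cone hij hξ) hξ))
  · obtain ⟨i, hi, -⟩ := hp ξ
    have hpre := (mem_cone_iff_isPrefix_ofFn le_rfl).mp hi
    exact ⟨(p i).length, i, hpre.eq_of_length (by simp)⟩

theorem isPrefixReplacement [Finite ι] {q : ι → List Bool} (hp : IsCode p) {g : Equiv.Perm Cantor}
    (hg : ∀ i ξ, g (prepend (p i) ξ) = prepend (q i) ξ) : IsPrefixReplacement g := by
  have hq : IsCode q := by
    rw [IsCode, show (fun x : ι × Cantor => prepend (q x.1) x.2) =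
      g ∘ fun x => prepend (p x.1) x.2 from funext fun x => (hg x.1 x.2).symm]
    exact g.bijective.comp hp
  refine ⟨_, _, hp.isCompleteAntichain_range, hq.isCompleteAntichain_range,
    (Equiv.ofInjective p hp.injective).symm.trans (Equiv.ofInjective q hq.injective), ?_⟩
  rintro ⟨_, i, rfl⟩ ξ
  simp [Equiv.ofInjective_symm_apply, hg]

end IsCode

theorem exists_isCode (ι : Type*) [Finite ι] [Nonempty ι] : ∃ p : ι → List Bool, IsCode p := by
  have hfin (n : ℕ) : ∃ p : Fin (n + 1) → List Bool, IsCode p := by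
    induction n with
    | zero => exact ⟨_, (isCode_ofFn 0).comp_equiv (Equiv.ofUnique (Fin 1) _)⟩
    | succ n ih =>
      obtain ⟨p, hp⟩ := ih
      exact ⟨_, hp.option.comp_equiv (finSuccEquiv _)⟩
  obtain ⟨n, hn⟩ := Nat.exists_eq_succ_of_ne_zero (Nat.card_pos (α := ι)).ne'
  obtain ⟨p, hp⟩ := hfin n
  exact ⟨_, hp.comp_equiv (Finite.equivFinOfCardEq hn)⟩

theorem exists_isCode_apply_eq_singleton_false [Finite ι] [Nontrivial ι] (i₀ : ι) :
    ∃ p : ι → List Bool, IsCode p ∧ p i₀ = [false] ∧ ∀ i ≠ i₀, [true] <+: p i := by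
  classical
  obtain ⟨i₁, h⟩ := exists_ne i₀
  have : Nonempty {i // i ≠ i₀} := ⟨⟨i₁, h⟩⟩
  obtain ⟨q, hq⟩ := exists_isCode {i // i ≠ i₀}
  refine ⟨_, hq.option.comp_equiv (Equiv.optionSubtypeNe i₀).symm, by simp, fun i hi => ?_⟩
  simp [Equiv.optionSubtypeNe_symm_of_ne hi]

end Codes

/-! ### Thompson's group `V` -/

theorem IsPrefixReplacement.exists_prepend_eq {g : Equiv.Perm Cantor} (hg : IsPrefixReplacement g) :
    ∃ N, ∀ u : List Bool, N ≤ u.length → ∃ v, ∀ ξ, g (prepend u ξ) = prepend v ξ := by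
  obtain ⟨A, B, ⟨hA, -, hA'⟩, -, σ, hσ⟩ := hg
  obtain ⟨N, hN⟩ := (hA.image List.length).bddAbove
  refine ⟨N, fun u hu => ?_⟩
  obtain ⟨n, hn⟩ := hA' (prepend u fun _ => false)
  have hmem : prepend u (fun _ => false) ∈
      cone (List.ofFn fun i : Fin n => prepend u (fun _ => false) i) :=
    (mem_cone_iff_isPrefix_ofFn (by simp)).mpr List.prefix_rfl
  obtain ⟨w, hw⟩ := isPrefix_of_prepend_mem_cone hmem ((hN ⟨_, hn, rfl⟩).trans hu)
  refine ⟨σ ⟨_, hn⟩ ++ w, fun ξ => ?_⟩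
  rw [prepend_append, ← hσ, ← prepend_append, hw]

theorem IsPrefixReplacement.mul {g h : Equiv.Perm Cantor} (hg : IsPrefixReplacement g)
    (hh : IsPrefixReplacement h) : IsPrefixReplacement (g * h) := by
  obtain ⟨N, hN⟩ := hg.exists_prepend_eq
  obtain ⟨M, hM⟩ := hh.exists_prepend_eq
  choose v hv using fun u : Fin M → Bool => hM (List.ofFn u) (by simp)
  choose w hw using fun (u : Fin M → Bool) (t : Fin N → Bool) => hN (v u ++ List.ofFn t) (by simp)
  refine ((isCode_ofFn M).append (isCode_ofFn N)).isPrefixReplacement (q := fun x => w x.1 x.2)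
    fun x ξ => ?_
  rw [Equiv.Perm.mul_apply, prepend_append, hv, ← prepend_append, hw]

theorem IsPrefixReplacement.inv {g : Equiv.Perm Cantor} (hg : IsPrefixReplacement g) :
    IsPrefixReplacement g⁻¹ := by
  obtain ⟨A, B, hA, hB, σ, hσ⟩ := hg
  refine ⟨B, A, hB, hA, σ.symm, fun b ξ => ?_⟩
  rw [Equiv.Perm.inv_eq_iff_eq, hσ, Equiv.apply_symm_apply]

/-- Thompson's group `V`, as a subgroup of the permutations of the Cantor set. -/
def thompsonV : Subgroup (Equiv.Perm Cantor) where
  carrier := {g | IsPrefixReplacement g}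
  mul_mem' := .mul
  one_mem' := (isCode_ofFn 0).isPrefixReplacement (q := List.ofFn) fun _ _ => rfl
  inv_mem' := .inv

theorem mem_thompsonV {g : Equiv.Perm Cantor} : g ∈ thompsonV ↔ IsPrefixReplacement g := Iff.rfl

namespace IsCode

variable {ι : Type*} {p : ι → List Bool}

theorem exists_smul_prepend [Finite ι] {q : ι → List Bool} (hp : IsCode p) (hq : IsCode q) :
    ∃ g : thompsonV, ∀ i ξ, g • prepend (p i) ξ = prepend (q i) ξ := by
  let g := (Equiv.ofBijective _ hp).symm.trans (Equiv.ofBijective _ hq)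
  have hg (i ξ) : g (prepend (p i) ξ) = prepend (q i) ξ :=
    congrArg (Equiv.ofBijective _ hq) (Equiv.ofBijective_symm_apply_apply _ hp (i, ξ))
  exact ⟨⟨g, mem_thompsonV.mpr (hp.isPrefixReplacement hg)⟩, hg⟩

theorem ext_smul (hp : IsCode p) {g h : thompsonV}
    (H : ∀ i ξ, g • prepend (p i) ξ = h • prepend (p i) ξ) : g = h :=
  Subtype.ext <| Equiv.ext <| hp.surjective.forall.mpr fun x => H x.1 x.2

/-- The permutation of the Cantor set that corresponds to a permutation of `ι × Cantor` under the
identification of `(i, ξ)` with `p i` followed by `ξ`. -/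
noncomputable def permCongr (hp : IsCode p) (e : Equiv.Perm (ι × Cantor)) : Equiv.Perm Cantor :=
  (Equiv.ofBijective _ hp).permCongr e

theorem permCongr_prepend (hp : IsCode p) (e : Equiv.Perm (ι × Cantor)) (i : ι) (ξ : Cantor) :
    hp.permCongr e (prepend (p i) ξ) = prepend (p (e (i, ξ)).1) (e (i, ξ)).2 := by
  have h := Equiv.ofBijective_symm_apply_apply _ hp (i, ξ)
  exact congrArg (fun x => Equiv.ofBijective _ hp (e x)) h

/-- The action of `Perm ι` on the Cantor set by permuting the words of a code. -/
noncomputable def permHom [Finite ι] (hp : IsCode p) : Equiv.Perm ι →* thompsonV :=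
  .mk' (fun σ => ⟨hp.permCongr (σ.prodCongr (.refl Cantor)),
    mem_thompsonV.mpr (hp.isPrefixReplacement (q := p ∘ σ) (hp.permCongr_prepend _))⟩) fun σ τ =>
    hp.ext_smul fun i ξ => by simp [Subgroup.smul_def, permCongr_prepend]

theorem permHom_smul_prepend [Finite ι] (hp : IsCode p) (σ : Equiv.Perm ι) (i : ι) (ξ : Cantor) :
    hp.permHom σ • prepend (p i) ξ = prepend (p (σ i)) ξ :=
  hp.permCongr_prepend _ i ξ

theorem isPrefixReplacement_permCongr_prodCongrRight [Finite ι] (hp : IsCode p)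
    (g : ι → thompsonV) :
    IsPrefixReplacement
      (hp.permCongr (Equiv.prodCongrRight fun i => (g i : Equiv.Perm Cantor))) := by
  choose N hN using fun i => (mem_thompsonV.mp (g i).2).exists_prepend_eq
  obtain ⟨M, hM⟩ := Finite.bddAbove_range N
  choose v hv using fun i (u : Fin M → Bool) => hN i (List.ofFn u) (by simpa using hM ⟨i, rfl⟩)
  refine (hp.append (isCode_ofFn M)).isPrefixReplacement (q := fun x => p x.1 ++ v x.1 x.2)
    fun x ξ => ?_
  rw [prepend_append, permCongr_prepend, prepend_append, ← hv]
  rfl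

/-- The action of `V ^ ι` on the Cantor set in which the `i`-th factor acts on the cone of the
`i`-th word of a code, as `V` does on the whole Cantor set. -/
noncomputable def piHom [Finite ι] (hp : IsCode p) : (ι → thompsonV) →* thompsonV :=
  .mk' (fun g => ⟨hp.permCongr (Equiv.prodCongrRight fun i => (g i : Equiv.Perm Cantor)),
    mem_thompsonV.mpr (hp.isPrefixReplacement_permCongr_prodCongrRight g)⟩) fun g h =>
    hp.ext_smul fun i ξ => by simp [Subgroup.smul_def, permCongr_prepend]

theorem piHom_smul_prepend [Finite ι] (hp : IsCode p) (g : ι → thompsonV) (i : ι) (ξ : Cantor) :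
    hp.piHom g • prepend (p i) ξ = prepend (p i) (g i • ξ) :=
  hp.permCongr_prepend _ i ξ

theorem piHom_injective [Finite ι] (hp : IsCode p) : Injective hp.piHom := by
  refine fun g h hgh => funext fun i => Subtype.ext <| Equiv.ext fun ξ => ?_
  refine prepend_injective (p i) ?_
  change prepend (p i) (g i • ξ) = prepend (p i) (h i • ξ)
  rw [← hp.piHom_smul_prepend, hgh, hp.piHom_smul_prepend]

theorem permHom_inv_mul_piHom_mul_permHom [Finite ι] (hp : IsCode p) (σ : Equiv.Perm ι)
    (g : ι → thompsonV) :
    (hp.permHom σ)⁻¹ * hp.piHom g * hp.permHom σ = hp.piHom (g ∘ σ) := by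
  rw [mul_assoc, inv_mul_eq_iff_eq_mul]
  refine hp.ext_smul fun i ξ => ?_
  simp only [mul_smul, permHom_smul_prepend, piHom_smul_prepend, comp_apply]

end IsCode

namespace thompsonV

theorem smul_cone {g : thompsonV} {u v : List Bool} (h : ∀ ξ, g • prepend u ξ = prepend v ξ) :
    g • cone u = cone v := by
  rw [cone, cone, Set.smul_set_range]
  exact congrArg Set.range (funext h)

theorem exists_hom_smul_cone_subset (G : Type*) [Group G] [Finite G] :
    ∃ f : G →* thompsonV, ∀ x ≠ 1, f x • cone [false] ⊆ cone [true] := by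
  obtain ⟨p, hp, hp_one, hp_ne⟩ := exists_isCode_apply_eq_singleton_false (some (1 : G))
  -- `none` is a fixed point, which leaves room for a second cone when `G` is trivial.
  refine ⟨hp.permHom.comp (MulAction.toPermHom G (Option G)), fun x hx => ?_⟩
  rw [MonoidHom.comp_apply, ← hp_one, smul_cone (hp.permHom_smul_prepend _ _)]
  exact cone_subset_cone (hp_ne _ (by simpa using hx))

theorem exists_zpow_smul_cone_subset :
    ∃ w : thompsonV, ∀ j : ℤ, j ≠ 0 → w ^ j • cone [true] ⊆ cone [false] := by
  -- `w` maps the cones of `01` and `1` into the cone of `01`, and `w⁻¹` maps the cones of `00` and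
  -- `1` into the cone of `00`.
  let p : Fin 4 → List Bool := ![[false, false, false], [false, false, true], [false, true], [true]]
  let q : Fin 4 → List Bool := ![[false, false], [true], [false, true, true], [false, true, false]]
  have hp : IsCode p := (isCode_iff_existsUnique_isPrefix (N := 3) (by decide)).mpr <| by
    unfold ExistsUnique; decide
  have hq : IsCode q := (isCode_iff_existsUnique_isPrefix (N := 3) (by decide)).mpr <| by
    unfold ExistsUnique; decide
  obtain ⟨w, hw⟩ := hp.exists_smul_prepend hq
  have hpq (i) : w • cone (p i) = cone (q i) := smul_cone (hw i)
  have hqp (i) : w⁻¹ • cone (q i) = cone (p i) := by rw [← hpq, inv_smul_smul]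
  refine ⟨w, fun j hj => (zpow_smul_subset_union (P := cone [false, true])
    (N := cone [false, false]) ?_ ?_ ?_ ?_ hj).trans (Set.union_subset ?_ ?_)⟩
  · exact (hpq 3).trans_subset (cone_subset_cone (by decide))
  · exact (hpq 2).trans_subset (cone_subset_cone (by decide))
  · exact (hqp 1).trans_subset (cone_subset_cone (by decide))
  · exact (hqp 0).trans_subset (cone_subset_cone (by decide))
  · exact cone_subset_cone (by decide)
  · exact cone_subset_cone (by decide)

theorem exists_injective_coprod (G : Type) [Group G] [Finite G] :
    ∃ f : G ∗ Multiplicative ℤ →* thompsonV, Injective f := by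
  obtain ⟨f, hf⟩ := exists_hom_smul_cone_subset G
  obtain ⟨w, hw⟩ := exists_zpow_smul_cone_subset
  refine ⟨_, coprod_lift_injective_of_ping_pong f (zpowersHom _ w) (.inr ?_) (cone_nonempty _)
    (cone_nonempty _) (disjoint_cone_singleton (by decide)) hf fun j hj => ?_⟩
  · exact (Cardinal.natCast_le_aleph0 (n := 3)).trans (Cardinal.aleph0_le_mk _)
  · exact hw _ hj

theorem exists_injective_of_disjoint_ker {G : Type*} [Group G] (f g : G →* thompsonV)
    (h : Disjoint f.ker g.ker) : ∃ φ : G →* thompsonV, Injective φ := by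
  refine ⟨isCode_singleton.piHom.comp (MonoidHom.pi (Bool.rec f g)), ?_⟩
  refine isCode_singleton.piHom_injective.comp ((injective_iff_map_eq_one _).mpr fun x hx => ?_)
  exact Subgroup.disjoint_def.mp h (congrFun hx false) (congrFun hx true)

end thompsonV

/-! ### Baumslag–Solitar groups -/

namespace BS

variable {m n : ℤ} {G : Type*} [Group G]

theorem conj_a_zpow : (b m n)⁻¹ * a m n ^ m * b m n = a m n ^ n := by
  have h : PresentedGroup.mk (bsRels m n) _ = 1 := PresentedGroup.one_of_mem rfl
  simp only [map_mul, map_inv, map_zpow] at h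
  exact mul_inv_eq_one.mp h

/-- The homomorphism from `BS(m,n)` given by two elements that satisfy its relation. -/
def lift (x y : G) (h : y⁻¹ * x ^ m * y = x ^ n) : BS m n →* G :=
  PresentedGroup.toGroup (f := ![x, y]) <| by rintro r rfl; simp [h]

theorem lift_a (x y : G) (h : y⁻¹ * x ^ m * y = x ^ n) : lift x y h (a m n) = x :=
  PresentedGroup.toGroup.of _

theorem lift_b (x y : G) (h : y⁻¹ * x ^ m * y = x ^ n) : lift x y h (b m n) = y :=
  PresentedGroup.toGroup.of _

theorem hom_ext {f g : BS m n →* G} (ha : f (a m n) = g (a m n)) (hb : f (b m n) = g (b m n)) :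
    f = g :=
  PresentedGroup.ext (Fin.forall_fin_two.mpr ⟨ha, hb⟩)

theorem eq_top_of_mem {H : Subgroup (BS m n)} (ha : a m n ∈ H) (hb : b m n ∈ H) : H = ⊤ :=
  (Subgroup.eq_top_iff' H).mpr (PresentedGroup.generated_by _ H (Fin.forall_fin_two.mpr ⟨ha, hb⟩))

theorem normal_zpowers_a_zpow (hmn : |m| = |n|) : (Subgroup.zpowers (a m n ^ m)).Normal := by
  rw [← Subgroup.normalizer_eq_top_iff]
  refine eq_top_of_mem ?_ (inv_mem_iff.mp ?_) <;>
    rw [Subgroup.mem_normalizer_iff_map_conj_eq, MonoidHom.map_zpowers, MonoidHom.coe_coe,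
      MulAut.conj_apply]
  · rw [((Commute.refl (a m n)).zpow_right m).mul_inv_cancel]
  · rw [inv_inv, conj_a_zpow, zpowers_zpow_eq_of_abs_eq _ hmn]

theorem exists_hom_coprod_ker_eq {C : Type*} [Group C] [IsCyclic C] (hC : Nat.card C = m.natAbs)
    (hmn : |m| = |n|) :
    ∃ f : BS m n →* C ∗ Multiplicative ℤ, f.ker = Subgroup.zpowers (a m n ^ m) := by
  obtain ⟨t, ht⟩ := IsCyclic.exists_generator (α := C)
  have ht_order : orderOf t = m.natAbs := by
    rw [orderOf_eq_card_of_forall_mem_zpowers ht, hC]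
  have htm : t ^ m = 1 := by rw [← pow_natAbs_eq_one, ← ht_order, pow_orderOf_eq_one]
  have htn : t ^ n = 1 := by
    rw [← Subgroup.zpowers_eq_bot, ← zpowers_zpow_eq_of_abs_eq t hmn, htm,
      Subgroup.zpowers_one_eq_bot]
  let f : BS m n →* C ∗ Multiplicative ℤ := lift (inl t) (inr (.ofAdd 1)) <| by
    rw [← map_zpow, ← map_zpow, htm, htn]; simp
  have hfa : f (a m n) = inl t := lift_a _ _ _
  have hfb : f (b m n) = inr (.ofAdd 1) := lift_b _ _ _
  have := normal_zpowers_a_zpow hmn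
  let π := QuotientGroup.mk' (Subgroup.zpowers (a m n ^ m))
  have hπa : orderOf (π (a m n)) ∣ orderOf t := by
    rw [ht_order, orderOf_dvd_iff_pow_eq_one, pow_natAbs_eq_one, ← map_zpow]
    exact (QuotientGroup.eq_one_iff _).mpr (Subgroup.mem_zpowers _)
  let r : C ∗ Multiplicative ℤ →* BS m n ⧸ Subgroup.zpowers (a m n ^ m) :=
    Monoid.Coprod.lift (monoidHomOfForallMemZpowers ht hπa) (zpowersHom _ (π (b m n)))
  have hrf : r.comp f = π := hom_ext (by simp [r, hfa]) (by simp [r, hfb])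
  refine ⟨f, le_antisymm ?_ ?_⟩
  · intro x hx
    have hπx : π x = 1 := by rw [← hrf, MonoidHom.comp_apply, hx, map_one]
    exact (QuotientGroup.eq_one_iff x).mp hπx
  · rw [Subgroup.zpowers_le, MonoidHom.mem_ker, map_zpow, hfa, ← map_zpow, htm, map_one]

theorem exists_hom_not_isOfFinOrder (hmn : |m| = |n|) :
    ∃ ψ : BS m n →* thompsonV, ¬IsOfFinOrder (ψ (a m n)) := by
  obtain ⟨w, hw⟩ := thompsonV.exists_zpow_smul_cone_subset
  have hw_order : ¬IsOfFinOrder w := not_isOfFinOrder_of_zpow_smul_subset (cone_nonempty _)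
    (disjoint_cone_singleton (by decide)) hw
  obtain rfl | rfl := abs_eq_abs.mp hmn
  · exact ⟨lift w 1 (by simp), by rwa [lift_a]⟩
  · let x : Bool → thompsonV := Bool.rec w⁻¹ w
    have hx : (x ^ (-n)) ∘ Equiv.boolNot = x ^ n := funext (by simp [x])
    refine ⟨lift (isCode_singleton.piHom x) (isCode_singleton.permHom Equiv.boolNot) ?_, ?_⟩
    · rw [← map_zpow, IsCode.permHom_inv_mul_piHom_mul_permHom, hx, map_zpow]
    · rw [lift_a, isCode_singleton.piHom_injective.isOfFinOrder_iff]
      exact fun h => hw_order ((Pi.evalMonoidHom (fun _ => thompsonV) true).isOfFinOrder h)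

end BS

/-- If `|m| = |n|` (with `m, n` nonzero), then `BS(m,n)` embeds in Thompson's group
`V`: there is an injective homomorphism from `BS(m,n)` to the permutation group of
the Cantor set whose image consists of prefix replacement maps. -/
theorem BS_embeds_in_V (m n : ℤ) (hm : m ≠ 0) (hn : n ≠ 0) (hmn : |m| = |n|) :
    ∃ φ : BS m n →* Equiv.Perm Cantor,
      Function.Injective φ ∧ ∀ x : BS m n, IsPrefixReplacement (φ x) := by
  have : NeZero m.natAbs := ⟨Int.natAbs_ne_zero.mpr hm⟩
  obtain ⟨f, hf⟩ := BS.exists_hom_coprod_ker_eq (C := Multiplicative (ZMod m.natAbs)) (by simp) hmn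
  obtain ⟨ι, hι⟩ := thompsonV.exists_injective_coprod (Multiplicative (ZMod m.natAbs))
  obtain ⟨ψ, hψ⟩ := BS.exists_hom_not_isOfFinOrder hmn
  have hdisj : Disjoint (ι.comp f).ker ψ.ker := by
    rw [MonoidHom.ker_comp_of_injective _ _ hι, hf]
    exact (disjoint_zpowers_ker hψ).mono_left
      (Subgroup.zpowers_le.mpr (Subgroup.zpow_mem_zpowers _ _))
  obtain ⟨φ, hφ⟩ := thompsonV.exists_injective_of_disjoint_ker _ _ hdisj
  exact ⟨thompsonV.subtype.comp φ, thompsonV.subtype_injective.comp hφ, fun x => (φ x).2⟩
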